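/- Let n ≥ 1 be a natural number, let C ≥ 4e be a real number, let V be a finite set with |V| ≥ C·n, and let r be a natural number with 1 ≤ r and C·r ≤ n. Let H be a random function from Fin n to V that is 2r-wise independent and uniform, and let Y denote the random variable counting the ordered consecutive collision pairs of H, i.e., Y = #{(i,j) : i ≠ j and (i,j) is a consecutive collision pair for H}. Then E[Y^r] ≤ 4·(2en/C)^r. -/

import Mathlib

open MeasureTheory Real Set

/-- `H : Ω → Fin n → V` is a `k`-wise independent and uniform random function:
for every set `T` of at most `k` indices, the joint distribution of `(H i)_{i ∈ T}`
is that of independent uniform random variables on `V`. -/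
def KWiseUniform {Ω V : Type*} [MeasurableSpace Ω] [Fintype V]
    (μ : Measure Ω) {n : ℕ} (k : ℕ) (H : Ω → Fin n → V) : Prop :=
  ∀ T : Finset (Fin n), T.card ≤ k → ∀ f : Fin n → V,
    μ {ω | ∀ i ∈ T, H ω i = f i} = ((Fintype.card V : ENNReal))⁻¹ ^ T.card

/-- `(i, j)` is a consecutive collision pair for `h`: `i ≠ j`, `h i = h j`, and
no index strictly between `i` and `j` has the same hash value. -/
def ConsecPair {n : ℕ} {V : Type*} (h : Fin n → V) (i j : Fin n) : Prop :=
  i ≠ j ∧ h i = h j ∧ ∀ a : Fin n, min i j < a → a < max i j → h a ≠ h i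

/-!
Consecutive collision pairs come in mirrored couples `(i, j)`, `(j, i)`, so `Y ^ r` is `2 ^ r`
times the number of `r`-tuples of such pairs with `i < j`. Each `j` is the larger entry of at most
one of these, so joining `i` to `j` gives a forest, in which each edge determines the value at `j`
from the value at a smaller index. Hence `s ≤ r` given pairs, which involve at most `2 * r`
indices, all occur with probability at most `|V|⁻¹ ^ s`. Summing this bound over all `r`-tuples,
where `s` is the number of distinct entries, gives `E[Y ^ r] ≤ (2 * (n ^ 2 / |V| + r)) ^ r`, and
both summands are at most `n / C`.
-/

section Moments

variable {α : Type*} [Fintype α]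

theorem sum_pow_card_insert_le [DecidableEq α] {R : Type*} [CommSemiring R] [PartialOrder R]
    [IsOrderedRing R] {x : R} (hx : 0 ≤ x) (s : Finset α) :
    ∑ a, x ^ (insert a s).card ≤ x ^ s.card * (Fintype.card α * x + s.card) := by
  have term_le (a : α) :
      x ^ (insert a s).card ≤ x ^ s.card * (x + if a ∈ s then 1 else 0) := by
    split_ifs with ha
    · rw [Finset.insert_eq_of_mem ha]
      exact le_mul_of_one_le_right (pow_nonneg hx _) (le_add_of_nonneg_left hx)
    · rw [Finset.card_insert_of_notMem ha, pow_succ, add_zero]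
  calc ∑ a, x ^ (insert a s).card
      ≤ ∑ a, x ^ s.card * (x + if a ∈ s then 1 else 0) := Finset.sum_le_sum fun a _ => term_le a
    _ = x ^ s.card * (Fintype.card α * x + s.card) := by
      simp [← Finset.mul_sum, Finset.sum_add_distrib]

theorem sum_pow_card_image_le [DecidableEq α] {R : Type*} [CommSemiring R] [PartialOrder R]
    [IsOrderedRing R] {x : R} (hx : 0 ≤ x) (r : ℕ) :
    ∑ f : Fin r → α, x ^ (Finset.univ.image f).card ≤ (Fintype.card α * x + r) ^ r := by
  induction r with
  | zero => simp
  | succ r ih =>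
    have image_cons (a : α) (f : Fin r → α) :
        Finset.univ.image (Fin.cons a f : Fin (r + 1) → α) = insert a (Finset.univ.image f) := by
      ext b
      simp [Fin.exists_fin_succ, eq_comm]
    have card_image_le (f : Fin r → α) : (Finset.univ.image f).card ≤ r := by
      simpa using Finset.card_image_le (s := Finset.univ) (f := f)
    calc ∑ f : Fin (r + 1) → α, x ^ (Finset.univ.image f).card
        = ∑ f : Fin r → α, ∑ a, x ^ (insert a (Finset.univ.image f)).card := by
          rw [← (Fin.consEquiv fun _ => α).sum_comp, Fintype.sum_prod_type_right]
          simp only [Fin.consEquiv, Equiv.coe_fn_mk, image_cons]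
      _ ≤ ∑ f : Fin r → α, x ^ (Finset.univ.image f).card * (Fintype.card α * x + r) := by
          refine Finset.sum_le_sum fun f _ => (sum_pow_card_insert_le hx _).trans ?_
          gcongr
          exact card_image_le f
      _ ≤ (Fintype.card α * x + r) ^ r * (Fintype.card α * x + r) := by
          rw [← Finset.sum_mul]
          gcongr
      _ ≤ (Fintype.card α * x + (r + 1 : ℕ)) ^ (r + 1) := by
          rw [← pow_succ]
          gcongr
          exact r.le_succ

theorem card_pow_eq_sum_ite [DecidableEq α] {R : Type*} [CommSemiring R] (s : Finset α) (r : ℕ) :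
    (s.card : R) ^ r = ∑ f : Fin r → α, if Finset.univ.image f ⊆ s then 1 else 0 := by
  have mem_piFinset_iff (f : Fin r → α) :
      Finset.univ.image f ⊆ s ↔ f ∈ Fintype.piFinset fun _ => s := by
    simp [Finset.image_subset_iff]
  simp_rw [mem_piFinset_iff, Finset.sum_boole, Finset.filter_univ_mem]
  simp

variable {Ω : Type*} [MeasurableSpace Ω] {μ : Measure Ω} [IsFiniteMeasure μ] {A : Ω → Finset α}

theorem integral_card_pow_eq_sum [DecidableEq α] (hA : ∀ S, MeasurableSet {ω | S ⊆ A ω}) (r : ℕ) :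
    ∫ ω, ((A ω).card : ℝ) ^ r ∂μ =
      ∑ f : Fin r → α, μ.real {ω | Finset.univ.image f ⊆ A ω} := by
  have integrable_indicator (f : Fin r → α) :
      Integrable ({ω | Finset.univ.image f ⊆ A ω}.indicator (1 : Ω → ℝ)) μ :=
    (integrable_const (1 : ℝ)).indicator (hA _)
  calc ∫ ω, ((A ω).card : ℝ) ^ r ∂μ
      = ∫ ω, ∑ f : Fin r → α, {ω | Finset.univ.image f ⊆ A ω}.indicator 1 ω ∂μ := by
        simp only [card_pow_eq_sum_ite, indicator_apply, mem_ofPred_eq, Pi.one_apply]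
    _ = ∑ f : Fin r → α, μ.real {ω | Finset.univ.image f ⊆ A ω} := by
        rw [integral_finsetSum _ fun f _ => integrable_indicator f]
        simp only [integral_indicator_one (hA _)]

theorem integral_card_pow_le (hA : ∀ S, MeasurableSet {ω | S ⊆ A ω}) {x : ℝ} (hx : 0 ≤ x) {r : ℕ}
    (hAx : ∀ S : Finset α, S.card ≤ r → μ.real {ω | S ⊆ A ω} ≤ x ^ S.card) :
    ∫ ω, ((A ω).card : ℝ) ^ r ∂μ ≤ (Fintype.card α * x + r) ^ r := by
  classical
  rw [integral_card_pow_eq_sum hA]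
  refine (Finset.sum_le_sum fun f _ => hAx _ ?_).trans (sum_pow_card_image_le hx r)
  simpa using Finset.card_image_le (s := Finset.univ) (f := f)

end Moments

theorem eqOn_of_eqOn_diff_image_snd {ι V : Type*} [LT ι] [WellFoundedLT ι]
    {S : Set (ι × ι)} (hS : ∀ p ∈ S, p.1 < p.2) {T : Set ι} (hT : Prod.fst '' S ⊆ T) {f g : ι → V}
    (hf : ∀ p ∈ S, f p.1 = f p.2) (hg : ∀ p ∈ S, g p.1 = g p.2)
    (hfg : EqOn f g (T \ Prod.snd '' S)) : EqOn f g T := by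
  intro j
  induction j using WellFoundedLT.induction with
  | ind j ih =>
    intro hj
    by_cases hjS : j ∈ Prod.snd '' S
    · obtain ⟨p, hp, rfl⟩ := hjS
      rw [← hf p hp, ← hg p hp]
      exact ih p.1 (hS p hp) (hT (mem_image_of_mem _ hp))
    · exact hfg ⟨hj, hjS⟩

namespace KWiseUniform

variable {Ω V : Type*} [MeasurableSpace Ω] [Fintype V] {μ : Measure Ω} {n k : ℕ}
  {H : Ω → Fin n → V}

theorem measure_mem_le_of_eqOn_imp (hH : KWiseUniform μ k H) {T U : Finset (Fin n)}
    (hT : T.card ≤ k) (hUT : U ⊆ T) {E : Set (Fin n → V)}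
    (hE : ∀ f ∈ E, ∀ g ∈ E, EqOn f g U → EqOn f g T) :
    μ {ω | H ω ∈ E} ≤ (Fintype.card V : ENNReal)⁻¹ ^ (T \ U).card := by
  classical
  let q : ENNReal := Fintype.card V
  let fiber (u : U → V) : Set Ω := {ω | H ω ∈ E ∧ ∀ i : U, H ω i = u i}
  have measure_fiber_le (u : U → V) : μ (fiber u) ≤ q⁻¹ ^ T.card := by
    obtain hu | ⟨ω₀, hω₀, hu₀⟩ := (fiber u).eq_empty_or_nonempty
    · simp [hu]
    · rw [← hH T hT (H ω₀)]
      refine measure_mono fun ω ⟨hω, hu⟩ => hE _ hω _ hω₀ fun i hi => ?_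
      exact (hu ⟨i, hi⟩).trans (hu₀ ⟨i, hi⟩).symm
  calc μ {ω | H ω ∈ E}
      ≤ μ (⋃ u, fiber u) :=
        measure_mono fun ω hω => mem_iUnion.2 ⟨fun i => H ω i, hω, fun _ => rfl⟩
    _ ≤ ∑ u, μ (fiber u) := measure_iUnion_fintype_le μ fiber
    _ ≤ ∑ _u : U → V, q⁻¹ ^ T.card := Finset.sum_le_sum fun u _ => measure_fiber_le u
    _ = (q * q⁻¹) ^ U.card * q⁻¹ ^ (T \ U).card := by
        rw [← Finset.card_sdiff_add_card_eq_card hUT]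
        simp only [Finset.sum_const, Finset.card_univ, Fintype.card_fun, Fintype.card_coe,
          nsmul_eq_mul, Nat.cast_pow, q]
        ring
    _ ≤ q⁻¹ ^ (T \ U).card := mul_le_of_le_one_left' (pow_le_one' (ENNReal.mul_inv_le_one q) _)

theorem measure_forall_eq_le {r : ℕ} (hH : KWiseUniform μ (2 * r) H) {S : Finset (Fin n × Fin n)}
    (hSr : S.card ≤ r) (hlt : ∀ p ∈ S, p.1 < p.2)
    (hinj : InjOn Prod.snd (S : Set (Fin n × Fin n))) :
    μ {ω | ∀ p ∈ S, H ω p.1 = H ω p.2} ≤ (Fintype.card V : ENNReal)⁻¹ ^ S.card := by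
  let J := S.image Prod.snd
  let T := S.image Prod.fst ∪ J
  have hT : T.card ≤ 2 * r :=
    calc T.card ≤ (S.image Prod.fst).card + J.card := Finset.card_union_le _ _
      _ ≤ S.card + S.card := add_le_add Finset.card_image_le Finset.card_image_le
      _ ≤ 2 * r := by omega
  have hJ : (T \ (T \ J)).card = S.card := by
    rw [Finset.sdiff_sdiff_eq_self Finset.subset_union_right, Finset.card_image_of_injOn hinj]
  rw [← hJ]
  refine hH.measure_mem_le_of_eqOn_imp hT Finset.sdiff_subset
    (E := {f | ∀ p ∈ S, f p.1 = f p.2}) fun f hf g hg hfg => ?_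
  refine eqOn_of_eqOn_diff_image_snd (S := (S : Set (Fin n × Fin n))) hlt ?_ hf hg ?_
  · simp [T]
  · simpa [J] using hfg

end KWiseUniform

namespace ConsecPair

variable {V : Type*} {n : ℕ} {h : Fin n → V} {i i' j : Fin n}

protected theorem symm (hij : ConsecPair h i j) : ConsecPair h j i := by
  obtain ⟨hne, heq, hbetween⟩ := hij
  refine ⟨hne.symm, heq.symm, fun a hja hai => ?_⟩
  rw [← heq]
  exact hbetween a (by rwa [min_comm]) (by rwa [max_comm])

theorem le_left_of_eq_of_lt (hij : ConsecPair h i j) (hi'j : i' < j) (heq : h i' = h j)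
    (hlt : i < j) : i' ≤ i := by
  by_contra! hii'
  refine hij.2.2 i' ?_ ?_ (heq.trans hij.2.1.symm)
  · rwa [min_eq_left hlt.le]
  · rwa [max_eq_right hlt.le]

theorem left_unique (hij : ConsecPair h i j) (hi'j : ConsecPair h i' j) (hlt : i < j)
    (hlt' : i' < j) : i = i' :=
  le_antisymm (hi'j.le_left_of_eq_of_lt hlt hij.2.1 hlt')
    (hij.le_left_of_eq_of_lt hlt' hi'j.2.1 hlt)

end ConsecPair

section ConsecPairs

variable {V : Type*} {n : ℕ}

open Classical in
/-- The consecutive collision pairs `(i, j)` of `h` with `i < j`, so that each unordered pair is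
listed once. -/
noncomputable def increasingConsecPairs (h : Fin n → V) : Finset (Fin n × Fin n) :=
  {p | p.1 < p.2 ∧ ConsecPair h p.1 p.2}

theorem mem_increasingConsecPairs {h : Fin n → V} {p : Fin n × Fin n} :
    p ∈ increasingConsecPairs h ↔ p.1 < p.2 ∧ ConsecPair h p.1 p.2 := by
  simp [increasingConsecPairs]

theorem injOn_snd_increasingConsecPairs (h : Fin n → V) :
    InjOn Prod.snd (increasingConsecPairs h : Set (Fin n × Fin n)) := by
  rintro ⟨i, j⟩ hp ⟨i', _⟩ hp' rfl
  obtain ⟨hlt, hij⟩ := mem_increasingConsecPairs.1 hp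
  obtain ⟨hlt', hi'j⟩ := mem_increasingConsecPairs.1 hp'
  exact Prod.ext (hij.left_unique hi'j hlt hlt') rfl

theorem ncard_consecPair (h : Fin n → V) :
    {p : Fin n × Fin n | ConsecPair h p.1 p.2}.ncard = 2 * (increasingConsecPairs h).card := by
  let A : Set (Fin n × Fin n) := increasingConsecPairs h
  have setOf_eq_union : {p : Fin n × Fin n | ConsecPair h p.1 p.2} = A ∪ Prod.swap ⁻¹' A := by
    ext ⟨i, j⟩
    simp only [A, mem_union, mem_preimage, Finset.mem_coe, mem_increasingConsecPairs,
      mem_ofPred_eq, Prod.swap_prod_mk]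
    constructor
    · exact fun hij => (lt_or_gt_of_ne hij.1).imp (⟨·, hij⟩) (⟨·, hij.symm⟩)
    · rintro (⟨_, hij⟩ | ⟨_, hji⟩)
      exacts [hij, hji.symm]
  have disjoint_swap : Disjoint A (Prod.swap ⁻¹' A) :=
    disjoint_left.2 fun p hp hp' =>
      (mem_increasingConsecPairs.1 hp).1.asymm (mem_increasingConsecPairs.1 hp').1
  rw [setOf_eq_union, ncard_union_eq disjoint_swap, ← image_swap_eq_preimage_swap,
    ncard_image_of_injective _ Prod.swap_injective, ncard_coe_finset, two_mul]

variable {Ω : Type*} [MeasurableSpace Ω] [Fintype V] {μ : Measure Ω} {r : ℕ} {H : Ω → Fin n → V}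

theorem measure_subset_increasingConsecPairs_le (hH : KWiseUniform μ (2 * r) H)
    {S : Finset (Fin n × Fin n)} (hS : S.card ≤ r) :
    μ {ω | S ⊆ increasingConsecPairs (H ω)} ≤ (Fintype.card V : ENNReal)⁻¹ ^ S.card := by
  obtain hempty | ⟨ω₀, hω₀⟩ := {ω | S ⊆ increasingConsecPairs (H ω)}.eq_empty_or_nonempty
  · simp [hempty]
  · have hlt : ∀ p ∈ S, p.1 < p.2 := fun p hp => (mem_increasingConsecPairs.1 (hω₀ hp)).1
    have hinj : InjOn Prod.snd (S : Set (Fin n × Fin n)) :=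
      (injOn_snd_increasingConsecPairs (H ω₀)).mono (Finset.coe_subset.2 hω₀)
    refine (measure_mono fun ω hω p hp => ?_).trans (hH.measure_forall_eq_le hS hlt hinj)
    exact (mem_increasingConsecPairs.1 (hω hp)).2.2.1

variable [MeasurableSpace V] [MeasurableSingletonClass V]

theorem integral_ncard_consecPair_pow_le [Nonempty V] [IsFiniteMeasure μ]
    (hmeas : ∀ i, Measurable fun ω => H ω i) (hH : KWiseUniform μ (2 * r) H) :
    ∫ ω, ({p : Fin n × Fin n | ConsecPair (H ω) p.1 p.2}.ncard : ℝ) ^ r ∂μ ≤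
      (2 * (n ^ 2 / Fintype.card V + r)) ^ r := by
  let x : ℝ := (Fintype.card V : ℝ)⁻¹
  have hA (S : Finset (Fin n × Fin n)) : MeasurableSet {ω | S ⊆ increasingConsecPairs (H ω)} :=
    measurable_pi_iff.2 hmeas (toFinite {h | S ⊆ increasingConsecPairs h}).measurableSet
  have hAx (S : Finset (Fin n × Fin n)) (hS : S.card ≤ r) :
      μ.real {ω | S ⊆ increasingConsecPairs (H ω)} ≤ x ^ S.card := by
    simpa [x, Measure.real] using
      ENNReal.toReal_mono (by simp) (measure_subset_increasingConsecPairs_le hH hS)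
  calc ∫ ω, ({p : Fin n × Fin n | ConsecPair (H ω) p.1 p.2}.ncard : ℝ) ^ r ∂μ
      = 2 ^ r * ∫ ω, ((increasingConsecPairs (H ω)).card : ℝ) ^ r ∂μ := by
        simp only [ncard_consecPair, Nat.cast_mul, Nat.cast_ofNat, mul_pow, integral_const_mul]
    _ ≤ 2 ^ r * (Fintype.card (Fin n × Fin n) * x + r) ^ r := by
        gcongr
        exact integral_card_pow_le hA (by positivity) hAx
    _ = (2 * (n ^ 2 / Fintype.card V + r)) ^ r := by
        simp [x, mul_pow, sq, div_eq_mul_inv]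

theorem stmt1_general [IsProbabilityMeasure μ] {C : ℝ} (hC : 0 < C)
    (hV : C * n ≤ Fintype.card V) (hrn : C * r ≤ n)
    (hmeas : ∀ i, Measurable fun ω => H ω i) (hind : KWiseUniform μ (2 * r) H) :
    ∫ ω, ({p : Fin n × Fin n | ConsecPair (H ω) p.1 p.2}.ncard : ℝ) ^ r ∂μ ≤ (4 * n / C) ^ r := by
  obtain rfl | hn := n.eq_zero_or_pos
  · obtain rfl : r = 0 := by
      have : (r : ℝ) ≤ 0 := nonpos_of_mul_nonpos_right (by simpa using hrn) hC
      exact_mod_cast this.antisymm r.cast_nonneg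
    simp
  have hcard : (0 : ℝ) < Fintype.card V := lt_of_lt_of_le (by positivity) hV
  have : Nonempty V := Fintype.card_pos_iff.1 (by exact_mod_cast hcard)
  have hsq : (n : ℝ) ^ 2 / Fintype.card V ≤ n / C := by
    rw [div_le_div_iff₀ hcard hC, sq, mul_assoc, mul_comm (n : ℝ) C]
    gcongr
  have hr : (r : ℝ) ≤ n / C := (le_div_iff₀' hC).2 hrn
  calc ∫ ω, ({p : Fin n × Fin n | ConsecPair (H ω) p.1 p.2}.ncard : ℝ) ^ r ∂μ
      ≤ (2 * (n ^ 2 / Fintype.card V + r)) ^ r := integral_ncard_consecPair_pow_le hmeas hind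
    _ ≤ (2 * (n / C + n / C)) ^ r := by gcongr
    _ = (4 * n / C) ^ r := by ring

end ConsecPairs

theorem four_mul_div_pow_le {a C : ℝ} (ha : 0 ≤ a) (hC : 0 ≤ C) (r : ℕ) :
    (4 * a / C) ^ r ≤ 4 * (2 * exp 1 * a / C) ^ r := by
  have he : 4 ≤ 2 * exp 1 := by linarith [add_one_le_exp 1]
  calc (4 * a / C) ^ r ≤ (2 * exp 1 * a / C) ^ r := by gcongr
    _ ≤ 4 * (2 * exp 1 * a / C) ^ r := le_mul_of_one_le_left (by positivity) (by norm_num)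

theorem stmt1 {Ω V : Type*} [MeasurableSpace Ω] [Fintype V]
    [MeasurableSpace V] [MeasurableSingletonClass V]
    (μ : Measure Ω) [IsProbabilityMeasure μ]
    (n r : ℕ) (hn : 1 ≤ n) (hr : 1 ≤ r)
    (C : ℝ) (hC : 4 * Real.exp 1 ≤ C)
    (hV : C * n ≤ Fintype.card V) (hrn : C * r ≤ n)
    (H : Ω → Fin n → V) (hmeas : ∀ i, Measurable fun ω => H ω i)
    (hind : KWiseUniform μ (2 * r) H) :
    (∫ ω, (Set.ncard {p : Fin n × Fin n | ConsecPair (H ω) p.1 p.2} : ℝ) ^ r ∂μ) ≤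
      4 * (2 * Real.exp 1 * n / C) ^ r := by
  have hC₀ : 0 < C := lt_of_lt_of_le (by positivity) hC
  exact (stmt1_general hC₀ hV hrn hmeas hind).trans (four_mul_div_pow_le n.cast_nonneg hC₀.le r)
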